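/- For each n ≥ 1, the sum over all permutations σ ∈ S_n of q^{s(σ)}, where s(σ) = n − run(σ) + 2·lsg(σ) + rsg(σ), equals the q-factorial [n]_q! = [1]_q[2]_q⋯[n]_q (as polynomials in q). -/

import Mathlib

/-!
Each run that is counted by `lsgAt` or `rsgAt` contains exactly one ascent `x < y` of adjacent
letters that straddles the given value, so the exponent is the number of ascents, plus twice the
number of occurrences of the vincular pattern 13-2, plus the number of occurrences of 2-13
(`card_cross`, `st_word`).

Build a permutation by inserting the values in increasing order. Its restriction to the values
below `v` falls into factors, separated by places where larger values are still to come. Such a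
state is a word in the letters `0, …, v - 1` and a marker `N` exceeding all of them, beginning with a
marker and having no two adjacent markers. The next letter `v` replaces one marker, and a marker may
be kept on either side of it (the left one must be kept at the initial marker). This is the
insertion process behind Laguerre histories. An ascent ending in a marker represents an open run, so
choosing the marker determines by how much the statistic grows (`sum_ch`, `sum_chTop`). If the word
has `h` non-initial markers, the total weight of the insertions is the operator `op`, whose
coefficients are those of a weighted Motzkin path: weight `q^(h+1) [h+1]` for going up,
`q^h ([h] + [h+1])` for staying level and `q^(h-1) [h]` for going down.

Iterating `op` from the indicator function of `h = 0` gives after `l` steps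
`[l]_q! q^(h(h-1)/2)` times the Gaussian binomial of `l` and `h`, by a linear identity between
Gaussian binomials (`op_qb`, `op_iterate`). At `h = 0` this is `[l]_q!`.

Finally, every permutation is produced by some sequence of insertions (`mem_gen`), and setting
`q = 1` shows that there are exactly `n!` of them ending without extra markers, so each permutation
is produced exactly once.
-/

open Finset

namespace SS

variable {n : ℕ}

/-- `descB σ j = true` iff there is a descent between positions `j` and `j+1`
in the word `σ(1)σ(2)⋯σ(n)`. -/
def descB (σ : Equiv.Perm (Fin n)) (j : ℕ) : Bool :=
  if h : j + 1 < n then decide ((σ ⟨j+1, h⟩) < σ ⟨j, Nat.lt_of_succ_lt h⟩) else false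

/-- The index of the maximal increasing run containing position `p`. -/
def runIdx (σ : Equiv.Perm (Fin n)) (p : ℕ) : ℕ :=
  ((Finset.range p).filter (fun j => descB σ j = true)).card

/-- The index of the run containing the value `v`. -/
def runOf (σ : Equiv.Perm (Fin n)) (v : Fin n) : ℕ := runIdx σ (σ.symm v).val

/-- The number of maximal increasing runs of `σ`. -/
def runCount (σ : Equiv.Perm (Fin n)) : ℕ :=
  if n = 0 then 0 else runIdx σ n + 1

/-- `lsgAt σ v` : number of runs strictly to the left of (the run of) `v`
containing both an element smaller than `v` and an element greater than `v`. -/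
def lsgAt (σ : Equiv.Perm (Fin n)) (v : Fin n) : ℕ :=
  ((Finset.range (runCount σ)).filter (fun r => r < runOf σ v ∧
      (∃ a : Fin n, runOf σ a = r ∧ a < v) ∧ (∃ b : Fin n, runOf σ b = r ∧ v < b))).card

/-- `rsgAt σ v` : number of runs strictly to the right of `v`
containing both an element smaller than `v` and an element greater than `v`. -/
def rsgAt (σ : Equiv.Perm (Fin n)) (v : Fin n) : ℕ :=
  ((Finset.range (runCount σ)).filter (fun r => runOf σ v < r ∧
      (∃ a : Fin n, runOf σ a = r ∧ a < v) ∧ (∃ b : Fin n, runOf σ b = r ∧ v < b))).card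

def lsg (σ : Equiv.Perm (Fin n)) : ℕ := ∑ v : Fin n, lsgAt σ v
def rsg (σ : Equiv.Perm (Fin n)) : ℕ := ∑ v : Fin n, rsgAt σ v

/-- position `p` begins a maximal increasing run. -/
def startsB (σ : Equiv.Perm (Fin n)) (p : ℕ) : Bool := p == 0 || descB σ (p - 1)

/-- position `p` ends a maximal increasing run. -/
def endsB (σ : Equiv.Perm (Fin n)) (p : ℕ) : Bool := p + 1 == n || descB σ p

def openerB (σ : Equiv.Perm (Fin n)) (v : Fin n) : Bool :=
  startsB σ (σ.symm v).val && !endsB σ (σ.symm v).val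
def closerB (σ : Equiv.Perm (Fin n)) (v : Fin n) : Bool :=
  endsB σ (σ.symm v).val && !startsB σ (σ.symm v).val
def singB (σ : Equiv.Perm (Fin n)) (v : Fin n) : Bool :=
  startsB σ (σ.symm v).val && endsB σ (σ.symm v).val
def contB (σ : Equiv.Perm (Fin n)) (v : Fin n) : Bool :=
  !startsB σ (σ.symm v).val && !endsB σ (σ.symm v).val

def lsgOp (σ : Equiv.Perm (Fin n)) : ℕ :=
  ∑ v ∈ univ.filter (fun v : Fin n => openerB σ v = true), lsgAt σ v
def rsgOp (σ : Equiv.Perm (Fin n)) : ℕ :=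
  ∑ v ∈ univ.filter (fun v : Fin n => openerB σ v = true), rsgAt σ v
def lsgClos (σ : Equiv.Perm (Fin n)) : ℕ :=
  ∑ v ∈ univ.filter (fun v : Fin n => closerB σ v = true), lsgAt σ v
def rsgClos (σ : Equiv.Perm (Fin n)) : ℕ :=
  ∑ v ∈ univ.filter (fun v : Fin n => closerB σ v = true), rsgAt σ v
def lsgSing (σ : Equiv.Perm (Fin n)) : ℕ :=
  ∑ v ∈ univ.filter (fun v : Fin n => singB σ v = true), lsgAt σ v
def rsgSing (σ : Equiv.Perm (Fin n)) : ℕ :=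
  ∑ v ∈ univ.filter (fun v : Fin n => singB σ v = true), rsgAt σ v
def lsgCont (σ : Equiv.Perm (Fin n)) : ℕ :=
  ∑ v ∈ univ.filter (fun v : Fin n => contB σ v = true), lsgAt σ v
def rsgCont (σ : Equiv.Perm (Fin n)) : ℕ :=
  ∑ v ∈ univ.filter (fun v : Fin n => contB σ v = true), rsgAt σ v

/-- `[m]_q = 1 + q + ⋯ + q^{m-1}`. -/
def qint {R : Type*} [CommRing R] (q : R) (m : ℕ) : R := ∑ i ∈ Finset.range m, q ^ i

/-- `[n]_q! = [1]_q [2]_q ⋯ [n]_q`. -/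
def qfact {R : Type*} [CommRing R] (q : R) (n : ℕ) : R := ∏ m ∈ Finset.range n, qint q (m+1)

/-- `moment b lam l h` : sum of the weights of all weighted Motzkin paths with `l` steps
starting at height `h` and ending at height `0`, where up steps have weight `1`,
a level step at height `k` has weight `b k`, and a down step from height `k`
has weight `lam k`.  The `n`th moment of the corresponding monic orthogonal
polynomial sequence is `moment b lam n 0`. -/
def moment {R : Type*} [CommRing R] (b lam : ℕ → R) : ℕ → ℕ → R
  | 0, h => if h = 0 then 1 else 0
  | (l+1), h => moment b lam l (h+1) + b h * moment b lam l h +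
      (if h = 0 then 0 else lam h * moment b lam l (h-1))


/-! ### A statistic on words, and insertion of a new largest letter -/

/-- The number of ascents of the word that straddle `u`, that is, of adjacent letters `x`, `y`
with `x < u < y`. -/
def up (u : ℕ) : List ℕ → ℕ
  | [] => 0
  | [_] => 0
  | x :: y :: t => (if x < u ∧ u < y then 1 else 0) + up u (y :: t)

/-- The number of letters of `t` strictly between `x` and `y`. -/
def btw (x y : ℕ) (t : List ℕ) : ℕ := t.countP (fun u => x < u ∧ u < y)

/-- The statistic of a word: the number of ascents, plus twice the number of occurrences of the
vincular pattern 13-2, plus the number of occurrences of 2-13. Each summand is charged to the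
leftmost letter of the pattern. -/
def st : List ℕ → ℕ
  | [] => 0
  | [_] => 0
  | x :: y :: t =>
      (if x < y then 1 else 0) + 2 * btw x y t + up x (y :: t) + st (y :: t)

/-- All words obtained from the given one by replacing one occurrence of the marker `N` by `v`,
optionally keeping a marker on either side of `v`. -/
def ch (N v : ℕ) : List ℕ → List (List ℕ)
  | [] => []
  | x :: t => (if x = N then [v :: t, v :: N :: t, N :: v :: t, N :: v :: N :: t] else []) ++
      (ch N v t).map (fun c => x :: c)

/-- Insertion of `v` into a word that begins with the marker `N`: as in `ch`, except that when the
initial marker is chosen, the marker to the left of `v` has to be kept. -/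
def chTop (N v : ℕ) : List ℕ → List (List ℕ)
  | [] => []
  | x :: t => [x :: v :: t, x :: v :: N :: t] ++ (ch N v t).map (fun c => x :: c)

/-- All words obtained from the one-letter word `N` by inserting `0, 1, …, l - 1` in this order.
They encode the initial parts of all possible constructions of a permutation. -/
def gen (N : ℕ) : ℕ → List (List ℕ)
  | 0 => [[N]]
  | l + 1 => (gen N l).flatMap (chTop N l)

/-- The invariant of the words that occur: the letters are the marker `N` and numbers below `v`,
and no two markers are adjacent. -/
structure Valid (N v : ℕ) (w : List ℕ) : Prop where
  mem : ∀ u ∈ w, u < v ∨ u = N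
  chain : w.IsChain (fun a b => a ≠ N ∨ b ≠ N)

theorem Valid.tail {N v x : ℕ} {t : List ℕ} (h : Valid N v (x :: t)) : Valid N v t :=
  ⟨fun u hu => h.mem u (List.mem_cons_of_mem _ hu), h.chain.tail⟩

theorem btw_ch_of_lt {N v x y : ℕ} (hv : v < N) (hy : y < v) {t c : List ℕ}
    (hc : c ∈ ch N v t) : btw x y c = btw x y t := by
  induction t generalizing c with
  | nil => simp [ch] at hc
  | cons a t ih =>
    simp only [ch, List.mem_append, List.mem_map] at hc
    rcases hc with hc | ⟨d, hd, rfl⟩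
    · split_ifs at hc with ha
      · simp only [List.mem_cons, List.not_mem_nil, or_false] at hc
        have h1 : ¬ (v < y) := by omega
        have h2 : ¬ (N < y) := by omega
        rcases hc with rfl | rfl | rfl | rfl <;> simp [btw, ha, h1, h2]
      · simp at hc
    · have := ih hd
      simp only [btw, List.countP_cons] at this ⊢
      rw [this]

/-- Inserting a new maximal letter to the right of an ascent `x < N` at a marker creates exactly
one occurrence of 13-2 there: the new letter lies between `x` and `N`, a marker does not. -/
theorem btw_ch_top {N v x : ℕ} (hv : v < N) (hx : x < v) {t c : List ℕ}
    (hc : c ∈ ch N v t) : btw x N c = btw x N t + 1 := by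
  induction t generalizing c with
  | nil => simp [ch] at hc
  | cons a t ih =>
    simp only [ch, List.mem_append, List.mem_map] at hc
    rcases hc with hc | ⟨d, hd, rfl⟩
    · split_ifs at hc with ha
      · simp only [List.mem_cons, List.not_mem_nil, or_false] at hc
        rcases hc with rfl | rfl | rfl | rfl <;> simp [btw, ha, hx, hv]
      · simp at hc
    · have := ih hd
      simp only [btw, List.countP_cons] at this ⊢
      rw [this]; omega

theorem up_eq_zero (y : ℕ) (r : List ℕ) (hr : ∀ u ∈ r, u ≤ y) : up y r = 0 := by
  induction r with
  | nil => rfl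
  | cons a r ih =>
    rcases r with _ | ⟨b, r⟩
    · rfl
    · have := hr b (by simp)
      simp only [up, ih (fun u hu => hr u (List.mem_cons_of_mem _ hu))]
      split_ifs <;> omega

/-- The ascents straddling an old letter `u` are unaffected by inserting `v`, since an ascent
`x < N` is only ever replaced by `x < v`. -/
theorem up_ch {N v u : ℕ} (hv : v < N) (hu : u < v ∨ u = N) {y : ℕ} {t c : List ℕ}
    (h : Valid N v (y :: t)) (hc : c ∈ ch N v t) : up u (y :: c) = up u (y :: t) := by
  induction t generalizing y c with
  | nil => simp [ch] at hc
  | cons a t ih =>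
    simp only [ch, List.mem_append, List.mem_map] at hc
    rcases hc with hc | ⟨d, hd, rfl⟩
    · split_ifs at hc with ha
      · subst ha
        simp only [List.mem_cons, List.not_mem_nil, or_false] at hc
        have hy : y < v := by
          have h1 := h.mem y (by simp)
          have h2 := h.chain
          simp at h2
          omega
        have ht : ∀ z s, t = z :: s → z < v := by
          rintro z s rfl
          have h1 := h.mem z (by simp)
          have h2 := h.chain
          simp at h2
          omega
        rcases t with _ | ⟨z, s⟩
        · rcases hc with rfl | rfl | rfl | rfl <;> simp only [up] <;> split_ifs <;> omega
        · have := ht z s rfl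
          rcases hc with rfl | rfl | rfl | rfl <;> simp only [up] <;> split_ifs <;> omega
      · simp at hc
    · simp only [up]
      rw [ih h.tail hd]

/-- The ascents straddling a new maximal letter are the pairs formed by a marker and the letter
before it. -/
theorem up_self {N v : ℕ} (hv : v < N) {y : ℕ} {t : List ℕ}
    (h : Valid N v (y :: t)) : up v (y :: t) = t.count N := by
  induction t generalizing y with
  | nil => simp [up]
  | cons a t ih =>
    have h1 := h.mem y (by simp)
    have h3 := h.mem a (by simp)
    have h2 := h.chain
    simp at h2
    simp only [up, ih h.tail, List.count_cons]
    by_cases ha : a = N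
    · subst ha
      rw [if_pos (by omega)]
      simp [add_comm]
    · simp [ha]; omega

/-! ### The generating function of the insertions into one word -/

section poly
variable {R : Type*} [CommRing R] (q : R)

/-- The total weight of inserting a letter at one of `k` non-initial markers, where `f j` is the
weight of a word with `j` non-initial markers left. The four ways of keeping or dropping the
adjacent markers contribute the four powers of `q`. -/
def inner (f : ℕ → R) : ℕ → R
  | 0 => 0
  | k + 1 => q ^ k * qint q (k + 1) * (f k + (q + q ^ 2) * f (k + 1) + q ^ 3 * f (k + 2))

theorem qint_succ (m : ℕ) : qint q (m + 1) = 1 + q * qint q m := by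
  simp only [qint, Finset.sum_range_succ', Finset.mul_sum, pow_succ']
  simp [add_comm]

theorem inner_succ (f : ℕ → R) (k : ℕ) :
    inner q f (k + 1) = q ^ k * (f k + (q + q ^ 2) * f (k + 1) + q ^ 3 * f (k + 2)) +
      q ^ 2 * inner q (fun m => f (m + 1)) k := by
  rcases k with _ | k
  · simp [inner, qint]
  · simp only [inner, qint_succ q (k + 1)]
    ring

/-- The insertions at the markers of `t`, in the context of a preceding letter `x`. Moving the
insertion point past one more marker turns one occurrence of 2-13 into one of 13-2, so the weight is
multiplied by `q`; `inner_succ` is the corresponding recursion. -/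
theorem sum_ch {N v : ℕ} (hv : v < N) {x : ℕ} {t : List ℕ} (h : Valid N v (x :: t))
    (f : ℕ → R) :
    ((ch N v t).map (fun c => q ^ st (x :: c) * f (c.count N))).sum
      = q ^ st (x :: t) * inner q f (t.count N) := by
  induction t generalizing x f with
  | nil => simp [ch, inner]
  | cons y t ih =>
    have hx := h.mem x (by simp)
    have hy := h.mem y (by simp)
    have hch := h.chain
    simp at hch
    simp only [ch, List.map_append, List.sum_append, List.map_map]
    by_cases hyN : y = N
    · subst hyN
      have hx : x < v := by omega
      have e : (ch y v t).map ((fun c => q ^ st (x :: c) * f (c.count y)) ∘ fun c => y :: c)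
          = (ch y v t).map (fun c => (q ^ (1 + 2 * (btw x y t + 1) + up x (y :: t))) *
              (q ^ st (y :: c) * f (c.count y + 1))) := by
        apply List.map_congr_left
        intro c hc
        simp only [Function.comp, st, btw_ch_top hv hx hc,
          up_ch hv (Or.inl hx) h.tail hc]
        rw [if_pos (by omega : x < y)]
        simp only [List.count_cons_self]
        rw [← mul_assoc, ← pow_add]
      rw [e, List.sum_map_mul_left, ih h.tail (fun m => f (m + 1))]
      simp only [List.count_cons_self, inner_succ]
      have hself := up_self hv h.tail
      have hlt : ∀ z s, t = z :: s → z < v := by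
        rintro z s rfl
        have h1 := h.mem z (by simp)
        simp at hch
        omega
      -- `s1`–`s4` below give the statistic of the four words in which the leading marker `y`
      -- of the suffix is replaced by `v`; the other insertions are covered by `ih`.
      have hb : btw x v t = btw x y t := by
        unfold btw
        apply List.countP_congr
        intro u hu
        have := h.mem u (by simp [hu])
        simp; omega
      have hupy := up_eq_zero y
      have hmt : ∀ u ∈ t, u < v ∨ u = y := h.tail.tail.mem
      have hmt' : ∀ u ∈ t, u ≤ y := fun u hu => by have := hmt u hu; omega
      have hst : st (y :: t) = st t := by
        rcases t with _ | ⟨z, s⟩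
        · simp [st]
        · have := hlt z s rfl
          have h0 : btw y z s = 0 := by
            simp only [btw, List.countP_eq_zero]; intro u hu; simp; omega
          simp only [st, h0, hupy _ hmt']
          split_ifs <;> omega
      have hbv : ∀ r, (∀ u ∈ r, u < v ∨ u = y) → btw v y r = 0 := by
        intro r hr
        simp only [btw, List.countP_eq_zero]; intro u hu; have := hr u hu; simp; omega
      have hup : up x (y :: t) = up x t := by
        rcases t with _ | ⟨z, s⟩
        · rfl
        · simp only [up]; split_ifs <;> omega
      have s0 : st (x :: y :: t) = 1 + 2 * btw x y t + up x t + st t := by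
        simp only [st, hup, hst]; rw [if_pos (by omega)]
      have hvt : st (v :: t) = t.count y + st t := by
        rcases t with _ | ⟨z, s⟩
        · simp [st]
        · have := hlt z s rfl
          have : btw v z s = 0 := by
            simp only [btw, List.countP_eq_zero]; intro u hu; simp; omega
          have h2 := hself
          simp only [up] at h2
          simp only [st, this]
          split_ifs at h2 ⊢ <;> omega
      have hxvt : up x (v :: t) = up x t := by
        rcases t with _ | ⟨z, s⟩
        · rfl
        · have := hlt z s rfl
          simp only [up]; split_ifs <;> omega
      have hvyt : st (v :: y :: t) = 1 + t.count y + st t := by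
        simp only [st, hbv t hmt, hself, hst]; split_ifs <;> omega
      have hyv : ∀ r, st (y :: v :: r) = up y (v :: r) + st (v :: r) := by
        intro r
        have : btw y v r = 0 := by
          simp only [btw, List.countP_eq_zero]; intro u hu; simp; omega
        simp only [st, this]; split_ifs <;> omega
      have s1 : st (x :: v :: t) = st (x :: y :: t) + t.count y := by
        rw [s0]; simp only [st, hxvt, hvt, hb]; split_ifs <;> omega
      have s2 : st (x :: v :: y :: t) = st (x :: y :: t) + t.count y + 1 := by
        rw [s0, st, hvyt]
        have e1 : btw x v (y :: t) = btw x y t := by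
          rw [← hb]; simp [btw, List.countP_cons]; omega
        have e2 : up x (v :: y :: t) = up x t := by
          rw [up, hup]; split_ifs <;> omega
        rw [e1, e2]; split_ifs <;> omega
      have s3 : st (x :: y :: v :: t) = st (x :: y :: t) + t.count y + 2 := by
        rw [s0, st, hyv, hvt, hupy]
        · have e1 : btw x y (v :: t) = btw x y t + 1 := by
            simp [btw, List.countP_cons]; omega
          have e2 : up x (y :: v :: t) = up x t := by
            rw [up, hxvt]; split_ifs <;> omega
          rw [e1, e2]; split_ifs <;> omega
        · intro u hu
          rcases List.mem_cons.1 hu with rfl | hu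
          · omega
          · exact hmt' u hu
      have s4 : st (x :: y :: v :: y :: t) = st (x :: y :: t) + t.count y + 3 := by
        rw [s0, st, hyv, hvyt, hupy]
        · have e1 : btw x y (v :: y :: t) = btw x y t + 1 := by
            simp [btw, List.countP_cons]; omega
          have e2 : up x (y :: v :: y :: t) = up x t := by
            rw [up, up, hup]; split_ifs <;> omega
          rw [e1, e2]; split_ifs <;> omega
        · intro u hu
          simp only [List.mem_cons] at hu
          rcases hu with rfl | rfl | hu
          · omega
          · omega
          · exact hmt' u hu
      have c1 : (v :: t).count y = t.count y := by
        rw [List.count_cons_of_ne]; omega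
      have c2 : (v :: y :: t).count y = t.count y + 1 := by
        rw [List.count_cons_of_ne (by omega)]; simp
      simp only [if_true, List.map_cons, List.map_nil, List.sum_cons, List.sum_nil,
        s1, s2, s3, s4, c1, c2, List.count_cons_self]
      have s0' : st (x :: y :: t) = 1 + 2 * btw x y t + up x (y :: t) + st (y :: t) := by
        rw [s0, hup, hst]
      rw [s0']
      ring
    · have hyv : y < v := by omega
      have e : (ch N v t).map ((fun c => q ^ st (x :: c) * f (c.count N)) ∘ fun c => y :: c)
          = (ch N v t).map
            (fun c => (q ^ ((if x < y then 1 else 0) + 2 * (btw x y t) + up x (y :: t))) *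
              (q ^ st (y :: c) * f (c.count N))) := by
        apply List.map_congr_left
        intro c hc
        simp only [Function.comp, st, btw_ch_of_lt hv hyv hc, up_ch hv hx h.tail hc]
        rw [List.count_cons_of_ne hyN, ← mul_assoc, ← pow_add]
      rw [e, List.sum_map_mul_left, ih h.tail f, List.count_cons_of_ne hyN]
      simp only [hyN, if_false, List.map_nil, List.sum_nil, st]
      ring


theorem valid_ch {N v : ℕ} {x : ℕ} {t c : List ℕ} (hv : v < N)
    (h : Valid N v (x :: t)) (hc : c ∈ ch N v t) : Valid N (v + 1) (x :: c) := by
  induction t generalizing x c with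
  | nil => simp [ch] at hc
  | cons a t ih =>
    simp only [ch, List.mem_append, List.mem_map] at hc
    have hm := h.mem
    have hch := h.chain
    rcases hc with hc | ⟨d, hd, rfl⟩
    · split_ifs at hc with ha
      · subst ha
        simp only [List.mem_cons, List.not_mem_nil, or_false] at hc
        have hx := hm x (by simp)
        have hvN : v ≠ a := by omega
        simp only [List.isChain_cons_cons] at hch
        have hch' : t.IsChain (fun b c => b ≠ a ∨ c ≠ a) := hch.2.tail
        have hct : (v :: t).IsChain (fun b c => b ≠ a ∨ c ≠ a) := by
          rw [List.isChain_cons]; exact ⟨fun _ _ => Or.inl hvN, hch'⟩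
        constructor
        · intro u hu
          have := hm u
          simp only [List.mem_cons] at this
          rcases hc with rfl | rfl | rfl | rfl <;> simp only [List.mem_cons] at hu <;> grind
        · rcases hc with rfl | rfl | rfl | rfl <;>
            simp only [List.isChain_cons_cons] <;> grind
      · simp at hc
    · have hd := ih h.tail hd
      constructor
      · intro u hu
        rcases List.mem_cons.1 hu with rfl | hu
        · have := hm u (by simp); omega
        · exact hd.mem u hu
      · simp only [List.isChain_cons_cons] at hch ⊢
        exact ⟨hch.1, hd.chain⟩

theorem valid_gen {N l : ℕ} (hl : l ≤ N) {w : List ℕ} (hw : w ∈ gen N l) :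
    Valid N l w ∧ ∃ t, w = N :: t := by
  induction l generalizing w with
  | zero =>
    simp only [gen, List.mem_singleton] at hw
    subst hw
    exact ⟨⟨by simp, by simp⟩, [], rfl⟩
  | succ l ih =>
    simp only [gen, List.mem_flatMap] at hw
    obtain ⟨w', hw', hw⟩ := hw
    obtain ⟨h, t, rfl⟩ := ih (by omega) hw'
    have hlN : l ≠ N := by omega
    have hm := h.mem
    have hch := h.chain
    simp only [chTop, List.mem_append, List.mem_map] at hw
    rcases hw with hw | ⟨c, hc, rfl⟩
    · simp only [List.mem_cons, List.not_mem_nil, or_false] at hw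
      refine ⟨?_, by rcases hw with rfl | rfl <;> simp⟩
      have hct : (l :: t).IsChain (fun b c => b ≠ N ∨ c ≠ N) := by
        rw [List.isChain_cons]; exact ⟨fun _ _ => Or.inl hlN, hch.tail⟩
      constructor
      · intro u hu
        have := hm u
        simp only [List.mem_cons] at this
        rcases hw with rfl | rfl <;> simp only [List.mem_cons] at hu <;> grind
      · rcases hw with rfl | rfl <;> simp only [List.isChain_cons_cons] <;> grind
    · exact ⟨valid_ch (by omega) h hc, c, rfl⟩

/-- The transfer operator: from a word with `h` non-initial markers, the total weight of inserting
the next letter, when a word with `j` non-initial markers has weight `f j`. -/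
def op (f : ℕ → R) (h : ℕ) : R := q ^ h * (f h + q * f (h + 1)) + inner q f h

theorem sum_chTop {N v : ℕ} (hv : v < N) {t : List ℕ} (h : Valid N v (N :: t))
    (f : ℕ → R) :
    ((chTop N v (N :: t)).map (fun c => q ^ st c * f (c.count N - 1))).sum
      = q ^ st (N :: t) * op q f ((N :: t).count N - 1) := by
  have hs := sum_ch q hv h f
  have hself := up_self hv h
  have hmt := h.tail.mem
  have hmt' : ∀ u ∈ t, u ≤ N := fun u hu => by have := hmt u hu; omega
  have hlt : ∀ z s, t = z :: s → z < v := by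
    rintro z s rfl
    have h1 := h.mem z (by simp)
    have h2 := h.chain
    simp at h2
    omega
  have hN : ∀ r : List ℕ, (∀ u ∈ r, u ≤ N) → st (N :: r) = st r := by
    intro r hr
    rcases r with _ | ⟨z, s⟩
    · simp [st]
    · have hz := hr z (by simp)
      have : btw N z s = 0 := by
        simp only [btw, List.countP_eq_zero]; intro u hu; simp; omega
      simp only [st, this, up_eq_zero N _ hr]
      split_ifs <;> omega
  have hvt : st (v :: t) = t.count N + st t := by
    rcases t with _ | ⟨z, s⟩
    · simp [st]
    · have := hlt z s rfl
      have : btw v z s = 0 := by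
        simp only [btw, List.countP_eq_zero]; intro u hu; simp; omega
      have h2 := hself
      simp only [up] at h2
      simp only [st, this]
      split_ifs at h2 ⊢ <;> omega
  have hvNt : st (v :: N :: t) = 1 + t.count N + st t := by
    have : btw v N t = 0 := by
      simp only [btw, List.countP_eq_zero]; intro u hu; have := hmt u hu; simp; omega
    simp only [st, this, hself, hN t hmt']; split_ifs <;> omega
  have s1 : st (N :: v :: t) = t.count N + st (N :: t) := by
    rw [hN t hmt', hN, hvt]
    intro u hu
    rcases List.mem_cons.1 hu with rfl | hu
    · omega
    · exact hmt' u hu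
  have s2 : st (N :: v :: N :: t) = 1 + t.count N + st (N :: t) := by
    rw [hN t hmt', hN, hvNt]
    intro u hu
    simp only [List.mem_cons] at hu
    rcases hu with rfl | rfl | hu
    · omega
    · omega
    · exact hmt' u hu
  have hvN : v ≠ N := by omega
  simp only [chTop, List.map_append, List.map_map, List.sum_append, Function.comp_def,
    List.count_cons_self, Nat.add_sub_cancel, hs, List.map_cons, List.map_nil, List.sum_cons,
    List.sum_nil, List.count_cons_of_ne hvN, s1, s2, op]
  ring

theorem sum_gen {N l : ℕ} (hl : l ≤ N) (f : ℕ → R) :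
    ((gen N l).map (fun w => q ^ st w * f (w.count N - 1))).sum = ((op q)^[l] f) 0 := by
  induction l generalizing f with
  | zero => simp [gen, st]
  | succ l ih =>
    rw [Function.iterate_succ_apply, ← ih (by omega), gen, List.map_flatMap,
      List.flatMap_def, List.sum_flatten, List.map_map]
    congr 1
    apply List.map_congr_left
    intro w hw
    obtain ⟨h, t, rfl⟩ := valid_gen (by omega) hw
    exact sum_chTop q (by omega) h f

/-! ### Iterating the transfer operator -/

/-- The coefficient of `z ^ h` in `(1 + z) (1 + q z) ⋯ (1 + q ^ (l - 1) z)`, i.e. the Gaussian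
binomial coefficient times `q ^ (h (h - 1) / 2)`. -/
def qb : ℕ → ℕ → R
  | 0, 0 => 1
  | 0, _ + 1 => 0
  | _ + 1, 0 => 1
  | l + 1, h + 1 => q ^ (h + 1) * qb l (h + 1) + q ^ h * qb l h

theorem qb_zero (l : ℕ) : qb q l 0 = 1 := by cases l <;> rfl

/-- The ratio of consecutive Gaussian binomials, with denominators cleared and multiplied by
`q - 1`; in this form it holds for all `l` and `h`. -/
theorem qb_ratio (l h : ℕ) :
    (q ^ (h + 1) - 1) * qb q l (h + 1) = (q ^ l - q ^ h) * qb q l h := by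
  induction l generalizing h with
  | zero => cases h <;> simp [qb]
  | succ l ih =>
    rcases h with _ | h
    · have := ih 0
      simp only [qb_zero, qb] at this ⊢
      linear_combination q * this
    · have h1 := ih (h + 1)
      have h2 := ih h
      simp only [qb]
      linear_combination q ^ (h + 2) * h1 + q ^ (h + 1) * h2

theorem sub_one_mul_qint (m : ℕ) : (q - 1) * qint q m = q ^ m - 1 :=
  mul_geom_sum q m

/-- The factor `q - 1` turns the `q`-integers into differences of powers, so that the identity
follows linearly from `qb_ratio`. -/
theorem op_qb (l h : ℕ) :
    (q - 1) * op q (qb q l) h = (q - 1) * (qint q (l + 1) * qb q (l + 1) h) := by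
  rw [← mul_assoc, sub_one_mul_qint]
  rcases h with _ | h
  · have := qb_ratio q l 0
    simp only [op, inner, qb_zero] at this ⊢
    linear_combination q * this
  · have h1 := qb_ratio q l h
    have h2 := qb_ratio q l (h + 1)
    have h3 := sub_one_mul_qint q (h + 1)
    simp only [op, inner, qb]
    linear_combination q ^ h * q ^ 2 * h2 + q ^ h * q * h1 +
      q ^ h * (qb q l h + (q + q ^ 2) * qb q l (h + 1) + q ^ 3 * qb q l (h + 2)) * h3

theorem op_smul (a : R) (f : ℕ → R) (h : ℕ) : op q (fun k => a * f k) h = a * op q f h := by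
  rcases h with _ | h <;> simp only [op, inner] <;> ring

end poly

open Polynomial in
theorem op_iterate (l : ℕ) :
    (op (X : ℤ[X]))^[l] (fun h => if h = 0 then 1 else 0)
      = fun h => qfact X l * qb X l h := by
  induction l with
  | zero =>
    funext h
    rcases h with _ | h <;> simp [qfact, qb]
  | succ l ih =>
    rw [Function.iterate_succ_apply', ih]
    funext h
    have hX : (X - 1 : ℤ[X]) ≠ 0 := by
      simpa using X_sub_C_ne_zero (1 : ℤ)
    rw [op_smul, mul_left_cancel₀ hX (op_qb X l h), qfact, qfact, Finset.prod_range_succ,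
      mul_assoc]

/-! ### Every permutation arises by insertion -/

theorem mem_ch (N v : ℕ) (A B c : List ℕ)
    (hc : c ∈ [v :: B, v :: N :: B, N :: v :: B, N :: v :: N :: B]) :
    A ++ c ∈ ch N v (A ++ N :: B) := by
  induction A with
  | nil => simp only [List.nil_append, ch, if_true]; exact List.mem_append_left _ hc
  | cons a A ih =>
    simp only [List.cons_append, ch]
    exact List.mem_append_right _ (List.mem_map.2 ⟨_, ih, rfl⟩)

/-- Removing a leading marker, if there is one, leaves a word that may be preceded by a marker. -/
theorem exists_strip_left (N : ℕ) (B : List ℕ) (h : B.IsChain (fun a b => a ≠ N ∨ b ≠ N)) :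
    ∃ B0 : List ℕ, (B = B0 ∨ B = N :: B0) ∧ (N :: B0).IsChain (fun a b => a ≠ N ∨ b ≠ N) := by
  rcases B with _ | ⟨b, B⟩
  · exact ⟨[], by simp, by simp⟩
  · by_cases hb : b = N
    · subst hb
      exact ⟨B, Or.inr rfl, h⟩
    · exact ⟨b :: B, Or.inl rfl, by simp [hb, List.isChain_cons_cons, h]⟩

/-- The mirror image of `exists_strip_left`. -/
theorem exists_strip_right (N : ℕ) (B : List ℕ)
    (h : B.IsChain (fun a b => a ≠ N ∨ b ≠ N)) :
    ∃ B0 : List ℕ, (B = B0 ∨ B = B0 ++ [N]) ∧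
      (B0 ++ [N]).IsChain (fun a b => a ≠ N ∨ b ≠ N) := by
  have h' : B.reverse.IsChain (fun a b => a ≠ N ∨ b ≠ N) := by
    rw [List.isChain_reverse]
    exact h.imp (fun _ _ => Or.symm)
  obtain ⟨B0, h1, h2⟩ := exists_strip_left N _ h'
  refine ⟨B0.reverse, ?_, ?_⟩
  · rcases h1 with h1 | h1
    · left; rw [← h1, List.reverse_reverse]
    · right; rw [← List.reverse_cons, ← h1, List.reverse_reverse]
  · rw [← List.reverse_cons, List.isChain_reverse]
    exact h2.imp (fun _ _ => Or.symm)

/-- Every admissible word is generated: replace its largest letter other than `N`, together with any markers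
next to it, by a single marker, and apply the induction hypothesis. -/
theorem mem_gen {N l : ℕ} (hl : l ≤ N) {t : List ℕ} (h : Valid N l (N :: t))
    (hp : (t.filter (fun u => u ≠ N)).Perm (List.range l)) : N :: t ∈ gen N l := by
  induction l generalizing t with
  | zero =>
    have : t = [] := by
      rcases t with _ | ⟨a, t⟩
      · rfl
      · have h1 := h.mem a (by simp)
        have h2 := h.chain
        simp at h2
        omega
    simp [this, gen]
  | succ l ih =>
    have hlN : l ≠ N := by omega
    have hlt : l ∈ N :: t := by
      have : l ∈ t.filter (fun u => u ≠ N) := hp.mem_iff.2 (by simp)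
      exact List.mem_cons_of_mem _ (List.mem_filter.1 this).1
    obtain ⟨P, B, hPB⟩ := List.append_of_mem hlt
    have hp' : ((N :: t).filter (fun u => u ≠ N)).Perm (List.range (l + 1)) := by
      simpa using hp
    have hch := h.chain
    have hm := h.mem
    rw [hPB] at hp' hch hm
    rw [hPB]
    obtain ⟨hP, hB, -⟩ := List.isChain_append.1 hch
    obtain ⟨P0, hP1, hP2⟩ := exists_strip_right N P hP
    obtain ⟨B0, hB1, hB2⟩ := exists_strip_left N B hB.tail
    have fP : P.filter (fun u => u ≠ N) = P0.filter (fun u => u ≠ N) := by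
      rcases hP1 with rfl | rfl <;> simp
    have fB : B.filter (fun u => u ≠ N) = B0.filter (fun u => u ≠ N) := by
      rcases hB1 with rfl | rfl <;> simp
    have hp0 : ((P0 ++ N :: B0).filter (fun u => u ≠ N)).Perm (List.range l) := by
      rw [List.filter_append, List.filter_cons_of_pos (by simpa using hlN), fP, fB,
        List.range_succ] at hp'
      have h1 := (List.perm_middle.symm.trans hp').trans
        (List.perm_append_comm (l₁ := List.range l) (l₂ := [l]))
      have h2 := (List.perm_cons l).1 h1
      rw [List.filter_append, List.filter_cons_of_neg (by simp)]
      exact h2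
    have hval : Valid N l (P0 ++ N :: B0) := by
      constructor
      · intro u hu
        by_cases huN : u = N
        · exact Or.inr huN
        · left
          have : u ∈ (P0 ++ N :: B0).filter (fun u => u ≠ N) :=
            List.mem_filter.2 ⟨hu, by simpa using huN⟩
          simpa using hp0.mem_iff.1 this
      · rw [List.isChain_split]
        exact ⟨hP2, hB2⟩
    rcases P0 with _ | ⟨a, A⟩
    · have hmem := ih (t := B0) (by omega) hval (by simpa using hp0)
      simp only [gen, List.mem_flatMap]
      refine ⟨_, hmem, ?_⟩
      rcases hP1 with rfl | rfl
      · simp at hPB; omega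
      · rcases hB1 with rfl | rfl <;> simp [chTop]
    · have ha : a = N := by
        rcases hP1 with rfl | rfl <;> simp at hPB <;> exact hPB.1.symm
      subst ha
      have hmem := ih (t := A ++ a :: B0) (by omega) hval (by simpa using hp0)
      simp only [gen, List.mem_flatMap]
      refine ⟨_, hmem, ?_⟩
      simp only [chTop]
      apply List.mem_append_right
      rw [List.mem_map]
      rcases hP1 with rfl | rfl
      · exact ⟨A ++ l :: B, mem_ch _ _ _ _ _ (by rcases hB1 with rfl | rfl <;> simp), by simp⟩
      · exact ⟨A ++ a :: l :: B, mem_ch _ _ _ _ _ (by rcases hB1 with rfl | rfl <;> simp),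
          by simp⟩


/-! ### The statistic as a sum over positions -/

theorem countP_eq_sum (p : ℕ → Bool) (l : List ℕ) :
    l.countP p = ∑ k ∈ range l.length, if p (l.getD k 0) then 1 else 0 := by
  induction l with
  | nil => simp
  | cons a t ih =>
    rw [List.countP_cons, ih, List.length_cons, Finset.sum_range_succ']
    simp

theorem up_eq_sum (u : ℕ) (l : List ℕ) :
    up u l = ∑ j ∈ range l.length,
      if j + 1 < l.length ∧ l.getD j 0 < u ∧ u < l.getD (j + 1) 0 then 1 else 0 := by
  induction l with
  | nil => simp [up]
  | cons a t ih =>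
    rw [List.length_cons, Finset.sum_range_succ']
    rcases t with _ | ⟨b, t⟩
    · simp [up]
    · rw [up, ih, add_comm]
      simp

/-- The statistic `st` for the word `g 0, …, g (m - 1)`, as a sum over pairs of positions. -/
def stF (m : ℕ) (g : ℕ → ℕ) : ℕ :=
  (∑ i ∈ range m, if i + 1 < m ∧ g i < g (i + 1) then 1 else 0) +
  2 * (∑ k ∈ range m, ∑ j ∈ range m,
    if j < k ∧ j + 1 < m ∧ g j < g k ∧ g k < g (j + 1) then 1 else 0) +
  ∑ k ∈ range m, ∑ j ∈ range m,
    if k < j ∧ j + 1 < m ∧ g j < g k ∧ g k < g (j + 1) then 1 else 0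

theorem st_eq_stF (l : List ℕ) : st l = stF l.length (fun i => l.getD i 0) := by
  induction l with
  | nil => simp [st, stF]
  | cons x t ih =>
    rcases t with _ | ⟨y, t⟩
    · simp [st, stF]
    · have hu := up_eq_sum x (y :: t)
      have hb := countP_eq_sum (fun u => x < u ∧ u < y) (y :: t)
      have hb' : btw x y t = (y :: t).countP (fun u => x < u ∧ u < y) := by
        simp [btw]
      rw [st, ih, hb', hb, hu]
      generalize hw : y :: t = w
      have hy : y = w.getD 0 0 := by simp [← hw]
      have hlen : 0 < w.length := by simp [← hw]
      simp only [hy, stF, List.length_cons, Finset.sum_range_succ' _ w.length]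
      simp only [List.getD_cons_succ, List.getD_cons_zero, Nat.add_lt_add_iff_right,
        Finset.sum_add_distrib, Nat.not_lt_zero, false_and, if_false, Finset.sum_const_zero,
        Nat.zero_lt_succ, true_and, hlen, lt_irrefl, decide_eq_true_eq, add_zero]
      ring

/-! ### Runs and straddling ascents -/

/-- The letter of `σ` at position `i`, extended by `0` to all natural numbers. -/
def val (σ : Equiv.Perm (Fin n)) (i : ℕ) : ℕ := if h : i < n then (σ ⟨i, h⟩).val else 0

theorem val_fin (σ : Equiv.Perm (Fin n)) (k : Fin n) : val σ k = (σ k).val := by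
  simp [val]

theorem val_of_lt (σ : Equiv.Perm (Fin n)) {i : ℕ} (h : i < n) :
    val σ i = (σ ⟨i, h⟩).val := by
  simp [val, h]

theorem val_inj (σ : Equiv.Perm (Fin n)) {i j : ℕ} (hi : i < n) (hj : j < n)
    (h : val σ i = val σ j) : i = j := by
  rw [val_of_lt σ hi, val_of_lt σ hj] at h
  have := σ.injective (Fin.ext h)
  simpa using this

theorem descB_iff (σ : Equiv.Perm (Fin n)) (j : ℕ) :
    descB σ j = true ↔ j + 1 < n ∧ val σ (j + 1) < val σ j := by
  unfold descB
  split_ifs with h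
  · simp [h, val, Nat.lt_of_succ_lt h]
  · simp [h]

theorem runIdx_succ (σ : Equiv.Perm (Fin n)) (j : ℕ) :
    runIdx σ (j + 1) = runIdx σ j + if descB σ j = true then 1 else 0 := by
  unfold runIdx
  rw [Finset.range_add_one, Finset.filter_insert]
  split_ifs <;> simp

theorem runIdx_mono (σ : Equiv.Perm (Fin n)) : Monotone (runIdx σ) :=
  monotone_nat_of_le_succ fun j => by rw [runIdx_succ]; omega

theorem val_lt_of_runIdx_eq (σ : Equiv.Perm (Fin n)) {a b : ℕ} (hab : a < b) (hb : b < n)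
    (h : runIdx σ a = runIdx σ b) : val σ a < val σ b := by
  induction b with
  | zero => omega
  | succ b ih =>
    have h1 := runIdx_mono σ (show a ≤ b by omega)
    have h2 := runIdx_succ σ b
    have hd : ¬ descB σ b = true := by
      intro hd; rw [if_pos hd] at h2; omega
    rw [if_neg hd] at h2
    rw [descB_iff] at hd
    have h3 : val σ b ≠ val σ (b + 1) := fun h => by
      have := val_inj σ (by omega) hb h; omega
    rcases (show a = b ∨ a < b by omega) with rfl | hab'
    · omega
    · have := ih hab' (by omega) (by omega)
      omega

/-- A sequence that starts below `c`, ends above it and avoids `c` crosses it in one step. -/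
theorem exists_cross (g : ℕ → ℕ) (c x y : ℕ) (hxy : x ≤ y) (hx : g x < c) (hy : c < g y)
    (hne : ∀ j, x ≤ j → j ≤ y → g j ≠ c) :
    ∃ j, x ≤ j ∧ j < y ∧ g j < c ∧ c < g (j + 1) := by
  induction y, hxy using Nat.le_induction with
  | base => omega
  | succ y hxy ih =>
    have h := hne y hxy (by omega)
    rcases Nat.lt_or_gt_of_ne h with h | h
    · exact ⟨y, hxy, by omega, h, hy⟩
    · obtain ⟨j, h1, h2, h3⟩ := ih h (fun j a b => hne j a (by omega))
      exact ⟨j, h1, by omega, h3⟩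

/-- A run not containing `σ k` has elements on both sides of `σ k` exactly when it contains an
ascent straddling `σ k`, and this ascent is then unique. So counting such runs (subject to a
condition `P` on their index) is counting straddling ascents (subject to the corresponding condition
`Q` on their position). -/
theorem card_cross (σ : Equiv.Perm (Fin n)) (k : Fin n) (P Q : ℕ → Prop) [DecidablePred P]
    [DecidablePred Q] (hP : ∀ r, P r → r ≠ runIdx σ k)
    (hPQ : ∀ j, j + 1 < n → val σ j < val σ k → val σ k < val σ (j + 1) →
      (Q j ↔ P (runIdx σ j))) :
    ((range (runCount σ)).filter (fun r => P r ∧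
      (∃ a : Fin n, runOf σ a = r ∧ a < σ k) ∧ (∃ b : Fin n, runOf σ b = r ∧ σ k < b))).card
    = ∑ j ∈ range n,
      if Q j ∧ j + 1 < n ∧ val σ j < val σ k ∧ val σ k < val σ (j + 1) then 1 else 0 := by
  rw [← Finset.card_filter]
  symm
  have hasc : ∀ j, val σ j < val σ k → val σ k < val σ (j + 1) →
      runIdx σ (j + 1) = runIdx σ j := by
    intro j h1 h2
    rw [runIdx_succ, if_neg, add_zero]
    rw [descB_iff]; omega
  apply Finset.card_bij (fun j _ => runIdx σ j)
  · intro j hj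
    simp only [Finset.mem_filter, Finset.mem_range] at hj ⊢
    obtain ⟨hjn, hQ, hj1, h1, h2⟩ := hj
    refine ⟨?_, (hPQ j hj1 h1 h2).1 hQ, ⟨σ ⟨j, hjn⟩, ?_, ?_⟩, ⟨σ ⟨j + 1, hj1⟩, ?_, ?_⟩⟩
    · have := runIdx_mono σ hjn.le
      unfold runCount
      rw [if_neg (by omega)]
      omega
    · simp [runOf]
    · rw [val_of_lt σ hjn, val_fin] at h1
      exact h1
    · simp [runOf, hasc j h1 h2]
    · rw [val_of_lt σ hj1, val_fin] at h2
      exact h2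
  · have key : ∀ i j, i < j → j < n → val σ k < val σ (i + 1) → val σ i < val σ k →
        val σ j < val σ k → runIdx σ i ≠ runIdx σ j := by
      intro i j hij hjn h1 h0 h2 h
      rw [← hasc i h0 h1] at h
      rcases (show i + 1 = j ∨ i + 1 < j by omega) with rfl | hlt
      · omega
      · have := val_lt_of_runIdx_eq σ hlt hjn h
        omega
    intro i hi j hj hij
    simp only [Finset.mem_filter, Finset.mem_range] at hi hj
    rcases lt_trichotomy i j with h | h | h
    · exact absurd hij (key i j h hj.1 hi.2.2.2.2 hi.2.2.2.1 hj.2.2.2.1)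
    · exact h
    · exact absurd hij.symm (key j i h hi.1 hj.2.2.2.2 hj.2.2.2.1 hi.2.2.2.1)
  · intro r hr
    simp only [Finset.mem_filter, Finset.mem_range] at hr
    obtain ⟨-, hPr, ⟨a, ha, hak⟩, ⟨b, hb, hbk⟩⟩ := hr
    obtain ⟨x, rfl⟩ := σ.surjective a
    obtain ⟨y, rfl⟩ := σ.surjective b
    simp only [runOf, Equiv.symm_apply_apply] at ha hb
    have hx : val σ x < val σ k := by simpa [val_fin] using hak
    have hy : val σ k < val σ y := by simpa [val_fin] using hbk
    have hxy : x.val < y.val := by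
      by_contra hc
      rcases (show y.val = x.val ∨ y.val < x.val by omega) with h | h
      · rw [h] at hy; omega
      · have := val_lt_of_runIdx_eq σ h x.2 (by omega)
        omega
    have hrun : ∀ j, x.val ≤ j → j ≤ y.val → runIdx σ j = r := by
      intro j h1 h2
      have h3 := runIdx_mono σ h1
      have h4 := runIdx_mono σ h2
      omega
    obtain ⟨j, h1, h2, h3, h4⟩ := exists_cross (val σ) (val σ k) x y hxy.le hx hy (by
      intro j h1 h2 h
      have hjk := val_inj σ (by omega) k.2 h
      exact hP r hPr (by rw [← hrun j h1 h2, hjk]))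
    refine ⟨j, ?_, hrun j h1 h2.le⟩
    simp only [Finset.mem_filter, Finset.mem_range]
    refine ⟨by omega, (hPQ j (by omega) h3 h4).2 ?_, by omega, h3, h4⟩
    rw [hrun j h1 h2.le]; exact hPr

theorem lsgAt_eq (σ : Equiv.Perm (Fin n)) (k : Fin n) :
    lsgAt σ (σ k) = ∑ j ∈ range n,
      if j < k ∧ j + 1 < n ∧ val σ j < val σ k ∧ val σ k < val σ (j + 1) then 1 else 0 := by
  rw [← card_cross σ k (fun r => r < runIdx σ k) (fun j => j < k) (fun r h => h.ne)]
  · simp only [lsgAt, runOf, Equiv.symm_apply_apply]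
    congr
  · intro j hj h1 h2
    constructor
    · intro h
      have h3 : j + 1 ≠ k := by rintro h3; rw [h3] at h2; omega
      refine lt_of_le_of_ne (runIdx_mono σ h.le) fun he => ?_
      have h4 := runIdx_mono σ (show j ≤ j + 1 by omega)
      have h5 := runIdx_mono σ (show j + 1 ≤ k by omega)
      have := val_lt_of_runIdx_eq σ (show j + 1 < k by omega) k.2 (by omega)
      omega
    · intro h
      by_contra hc
      have := runIdx_mono σ (show (k : ℕ) ≤ j by omega)
      omega

theorem rsgAt_eq (σ : Equiv.Perm (Fin n)) (k : Fin n) :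
    rsgAt σ (σ k) = ∑ j ∈ range n,
      if k < j ∧ j + 1 < n ∧ val σ j < val σ k ∧ val σ k < val σ (j + 1) then 1 else 0 := by
  rw [← card_cross σ k (fun r => runIdx σ k < r) (fun j => k < j) (fun r h => h.ne')]
  · simp only [rsgAt, runOf, Equiv.symm_apply_apply]
    congr
  · intro j hj h1 h2
    constructor
    · intro h
      refine lt_of_le_of_ne (runIdx_mono σ h.le) fun he => ?_
      have := val_lt_of_runIdx_eq σ h (by omega) he
      omega
    · intro h
      by_contra hc
      have := runIdx_mono σ (show j ≤ (k : ℕ) by omega)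
      omega

theorem asc_eq (σ : Equiv.Perm (Fin n)) (hn : 1 ≤ n) :
    n - runCount σ =
      ∑ i ∈ range n, if i + 1 < n ∧ val σ i < val σ (i + 1) then 1 else 0 := by
  obtain ⟨m, rfl⟩ : ∃ m, n = m + 1 := ⟨n - 1, by omega⟩
  have h0 : ¬ descB σ m = true := by rw [descB_iff]; omega
  rw [runCount, if_neg (by omega), runIdx_succ, if_neg h0, Finset.sum_range_succ,
    if_neg (by omega), ← Finset.card_filter, runIdx]
  have h := Finset.card_filter_add_card_filter_not (s := range m)
    (fun j => descB σ j = true)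
  rw [Finset.card_range] at h
  have h2 : ((range m).filter fun i => i + 1 < m + 1 ∧ val σ i < val σ (i + 1)) =
      (range m).filter fun j => ¬ descB σ j = true := by
    apply Finset.filter_congr
    intro i hi
    rw [Finset.mem_range] at hi
    have hne : val σ i ≠ val σ (i + 1) := fun h => by
      have := val_inj σ (by omega) (by omega) h; omega
    rw [descB_iff]; omega
  rw [h2]
  omega

/-- The one-line notation of `σ`, with letters `0, …, n - 1`. -/
def word (σ : Equiv.Perm (Fin n)) : List ℕ := List.ofFn (fun i => (σ i).val)

theorem st_word (σ : Equiv.Perm (Fin n)) (hn : 1 ≤ n) :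
    st (n :: word σ) = n - runCount σ + 2 * lsg σ + rsg σ := by
  have hlt : ∀ u ∈ word σ, u < n := by
    intro u hu
    simp only [word, List.mem_ofFn] at hu
    obtain ⟨i, rfl⟩ := hu
    exact (σ i).2
  have h0 : st (n :: word σ) = st (word σ) := by
    generalize word σ = w at hlt
    rcases w with _ | ⟨z, s⟩
    · simp [st]
    · have hz := hlt z (by simp)
      have : btw n z s = 0 := by
        simp only [btw, List.countP_eq_zero]; intro u hu; simp; omega
      simp only [st, this, up_eq_zero n _ (fun u hu => (hlt u hu).le)]
      rw [if_neg (by omega)]; omega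
  have hg : (fun i => (word σ).getD i 0) = val σ := by
    funext i
    simp only [word, val, List.getD_eq_getElem?_getD, List.getElem?_ofFn]
    split_ifs <;> simp
  have hlen : (word σ).length = n := by simp [word]
  rw [h0, st_eq_stF, hg, hlen, stF, asc_eq σ hn, lsg, rsg, ← Equiv.sum_comp σ,
    ← Equiv.sum_comp σ (rsgAt σ)]
  simp only [lsgAt_eq, rsgAt_eq]
  rw [Finset.sum_range (n := n) (fun k => ∑ j ∈ range n,
    if j < k ∧ j + 1 < n ∧ val σ j < val σ k ∧ val σ k < val σ (j + 1) then 1 else 0),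
    Finset.sum_range (n := n) (fun k => ∑ j ∈ range n,
    if k < j ∧ j + 1 < n ∧ val σ j < val σ k ∧ val σ k < val σ (j + 1) then 1 else 0)]

theorem sum_map_ite {R α : Type*} [CommRing R] (l : List α) (g : α → R) (p : α → Prop)
    [DecidablePred p] :
    (l.map (fun w => g w * if p w then 1 else 0)).sum
      = ((l.filter (fun w => p w)).map g).sum := by
  induction l with
  | nil => simp
  | cons a l ih =>
    rw [List.map_cons, List.sum_cons, ih]
    by_cases h : p a <;> simp [h]

/-! ### Summing over all permutations -/

theorem word_mem_gen (σ : Equiv.Perm (Fin n)) : n :: word σ ∈ gen n n := by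
  have hlt : ∀ u ∈ word σ, u < n := by
    intro u hu
    simp only [word, List.mem_ofFn] at hu
    obtain ⟨i, rfl⟩ := hu
    exact (σ i).2
  have hnd : (word σ).Nodup := by
    rw [word, List.nodup_ofFn]
    exact Fin.val_injective.comp σ.injective
  apply mem_gen le_rfl
  · constructor
    · intro u hu
      rcases List.mem_cons.1 hu with rfl | hu
      · exact Or.inr rfl
      · exact Or.inl (hlt u hu)
    · have h : (n :: word σ).Nodup := by
        rw [List.nodup_cons]
        exact ⟨fun h => (hlt n h).ne rfl, hnd⟩
      refine (List.Pairwise.isChain h).imp fun a b hab => ?_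
      by_contra hc
      simp only [ne_eq, not_or, not_not] at hc
      exact hab (hc.1.trans hc.2.symm)
  · have hf : (word σ).filter (fun u => u ≠ n) = word σ := by
      rw [List.filter_eq_self]
      intro u hu
      simpa using (hlt u hu).ne
    rw [hf, List.perm_ext_iff_of_nodup hnd List.nodup_range]
    intro a
    rw [List.mem_range]
    refine ⟨hlt a, fun ha => ?_⟩
    simp only [word, List.mem_ofFn]
    exact ⟨σ.symm ⟨a, ha⟩, by simp⟩

end SS
open SS in
/-- `∑_{σ ∈ S_n} q^{n - run(σ) + 2 lsg(σ) + rsg(σ)} = [n]_q!` as polynomials in `q`. -/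
theorem stmt2 (n : ℕ) (hn : 1 ≤ n) :
    ∑ σ : Equiv.Perm (Fin n),
        (Polynomial.X : Polynomial ℤ) ^ (n - runCount σ + 2 * lsg σ + rsg σ)
      = qfact (Polynomial.X : Polynomial ℤ) n := by
  set L := (gen n n).filter (fun w => w.count n - 1 = 0) with hL
  have hsum : (L.map (fun w => (Polynomial.X : Polynomial ℤ) ^ st w)).sum
      = qfact (Polynomial.X : Polynomial ℤ) n := by
    rw [hL, ← sum_map_ite, sum_gen _ le_rfl (fun h => if h = 0 then 1 else 0), op_iterate]
    simp [qb_zero]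
  -- Setting `q = 1` counts the generated words without extra markers.
  have hlen : L.length = n.factorial := by
    have h := congrArg (Polynomial.eval 1) hsum
    rw [Polynomial.eval_listSum, List.map_map] at h
    simp only [Function.comp_def, Polynomial.eval_pow, Polynomial.eval_X, one_pow,
      List.map_const', List.sum_replicate, qfact, Polynomial.eval_prod, qint,
      Polynomial.eval_finsetSum, Finset.sum_const, Finset.card_range, nsmul_eq_mul, mul_one]
      at h
    rw [← Finset.prod_range_add_one_eq_factorial]
    exact_mod_cast h
  have hinj : Function.Injective (fun σ : Equiv.Perm (Fin n) => n :: word σ) := by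
    intro σ τ h
    simp only [word, List.cons.injEq, true_and] at h
    have := List.ofFn_injective h
    ext i
    exact congrFun this i
  have hsub : univ.image (fun σ : Equiv.Perm (Fin n) => n :: word σ) ⊆ L.toFinset := by
    intro w hw
    simp only [Finset.mem_image, Finset.mem_univ, true_and] at hw
    obtain ⟨σ, rfl⟩ := hw
    have hc : (word σ).count n = 0 := by
      rw [List.count_eq_zero]
      intro h
      simp only [word, List.mem_ofFn] at h
      obtain ⟨i, hi⟩ := h
      exact (σ i).2.ne hi
    simp [hL, word_mem_gen, hc]
  have hcard : (univ.image (fun σ : Equiv.Perm (Fin n) => n :: word σ)).card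
      = n.factorial := by
    rw [Finset.card_image_of_injective _ hinj, Finset.card_univ, Fintype.card_perm,
      Fintype.card_fin]
  -- The `n!` words of permutations are among these `n!` words, which therefore are distinct and
  -- are exactly the words of permutations.
  have heq := Finset.eq_of_subset_of_card_le hsub
    ((List.toFinset_card_le L).trans (by rw [hcard, hlen]))
  have hnd : L.Nodup := by
    rw [← Multiset.coe_nodup, ← Multiset.toFinset_card_eq_card_iff_nodup]
    change L.toFinset.card = L.length
    rw [← heq, hcard, hlen]
  rw [← hsum, ← List.sum_toFinset _ hnd, ← heq, Finset.sum_image hinj.injOn]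
  exact Finset.sum_congr rfl fun σ _ => by rw [st_word σ hn]
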